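/- Let a, b be objects of the Weyl groupoid of a Cartan scheme with finite root system, J ⊆ I, and w ∈ Hom(b, a). Then J(w) ⊆ J if and only if w(R^b_+) ⊆ R^a_+ ∪ Σ_{j∈J} ℤα_j, where J(w) denotes the set of letters appearing in any reduced decomposition of w. -/

import Mathlib

/-!
The heart of the matter is the exchange property: if a word `l` with source `b` sends some
nonpositive vector to `α_i`, then `l` represents the same morphism as a word `i :: l'` with `l'`
shorter than `l` (`exchange`).  Granting this, a reduced word `i :: l'` sends a positive root to
`-α_i`; the right-hand condition then forces `i ∈ J`, and it is inherited by `l'`, so that all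
letters lie in `J` by induction.  Conversely, a word with letters in `J` does not change the
coordinates outside `J`, and a root with one positive coordinate is positive.

In a groupoid the exchange property cannot be read off from conjugation of reflections, because the
Cartan matrix depends on the object; it is deduced from the rank two relations.  Write
`m = |R^a ∩ (ℕα_s + ℕα_t)|`.  By counting inverted roots in the plane of `s, t`, an alternating
word of length `< m` whose first applied letter is `s` keeps `α_t` positive (`altWord_pos`), while
an alternating word of length `m` inverts every positive root of the plane.  Hence the two
alternating words of length `m` agree on `α_s` and `α_t`; positivity of roots makes them agree
everywhere, and axiom (R4) says that their targets agree (`braid`).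

For `exchange` itself, let `l = j :: l₂` with `j ≠ i`.  If `α_j` is not a descent of `l`, then two
letters of `l` can be cancelled.  If it is, every positive root of the plane of `i, j` is inverted
by the inverse of `l`, so by induction an alternating word of length `m` with leftmost letter `j`
can be split off from the left of `l`, and `braid` replaces it by the one with leftmost letter `i`.
-/

set_option linter.unusedSectionVars false

/-- A Cartan scheme `C = C(I, A, (ρ_i), (C^a))`. -/
structure CartanScheme (I A : Type) [Fintype I] [DecidableEq I] [Fintype A] [Nonempty A] where
  ρ : I → A → A
  c : A → I → I → ℤ
  ρ_invol : ∀ i a, ρ i (ρ i a) = a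
  c_diag : ∀ a i, c a i i = 2
  c_offdiag_nonpos : ∀ a i j, i ≠ j → c a i j ≤ 0
  c_zero_symm : ∀ a i j, c a i j = 0 → c a j i = 0
  c_rho : ∀ a i j, c (ρ i a) i j = c a i j

namespace CartanScheme

variable {I A : Type} [Fintype I] [DecidableEq I] [Fintype A] [Nonempty A] [DecidableEq A]
variable (C : CartanScheme I A)

/-- The simple reflection `σ_i^a` as a map `ℤ^I → ℤ^I`, `σ_i^a(α_j) = α_j - c^a_{ij} α_i`. -/
def sigma (a : A) (i : I) : (I → ℤ) → (I → ℤ) :=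
  fun v k => v k - (if k = i then ∑ j, C.c a i j * v j else 0)

/-- Target object of the word `[i_1, …, i_k]` read at source object `a`:
`ρ_{i_1} ⋯ ρ_{i_k}(a)`. -/
def wordTarget (a : A) : List I → A
  | [] => a
  | i :: l => C.ρ i (wordTarget a l)

/-- The map `σ_{i_1} ⋯ σ_{i_k}^a : ℤ^I → ℤ^I` determined by a word with source `a`. -/
def wordMap (a : A) : List I → ((I → ℤ) → (I → ℤ))
  | [] => id
  | i :: l => C.sigma (C.wordTarget a l) i ∘ wordMap a l

theorem wordTarget_append (a : A) (l₁ l₂ : List I) :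
    C.wordTarget a (l₁ ++ l₂) = C.wordTarget (C.wordTarget a l₂) l₁ := by
  induction l₁ with
  | nil => rfl
  | cons i l ih => simp [wordTarget, ih]

theorem wordMap_append (a : A) (l₁ l₂ : List I) :
    C.wordMap a (l₁ ++ l₂) = C.wordMap (C.wordTarget a l₂) l₁ ∘ C.wordMap a l₂ := by
  induction l₁ with
  | nil => rfl
  | cons i l ih => simp [wordMap, ih, wordTarget_append, Function.comp_assoc]

/-- A morphism of the Weyl groupoid `W(C)`: a source object, a target object, and a map
`ℤ^I → ℤ^I` which is a composition of simple reflections along some word. -/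
@[ext]
structure Mor where
  src : A
  tgt : A
  toFun : (I → ℤ) → (I → ℤ)
  spec : ∃ l : List I, C.wordTarget src l = tgt ∧ C.wordMap src l = toFun

variable {C}

/-- A word realizes a morphism. -/
def Realizes (w : Mor C) (l : List I) : Prop :=
  C.wordTarget w.src l = w.tgt ∧ C.wordMap w.src l = w.toFun

variable (C)

/-- The identity morphism `id^a`. -/
def idMor (a : A) : Mor C := ⟨a, a, id, ⟨[], rfl, rfl⟩⟩

/-- The generator `σ_i^a ∈ Hom(a, ρ_i(a))`. -/
def genMor (i : I) (a : A) : Mor C :=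
  ⟨a, C.ρ i a, C.sigma a i, ⟨[i], rfl, Function.comp_id _⟩⟩

/-- The simple reflection with target `a`, i.e. `id^a σ_i = σ_i^{ρ_i(a)} ∈ Hom(ρ_i(a), a)`. -/
def sgen (a : A) (i : I) : Mor C :=
  { src := C.ρ i a, tgt := a, toFun := C.sigma (C.ρ i a) i,
    spec := ⟨[i], by simp [wordTarget, C.ρ_invol], Function.comp_id _⟩ }

variable {C}

/-- Composition `u ∘ v` (with `v` applied first); junk value `u` if not composable. -/
def Mor.comp (u v : Mor C) : Mor C :=
  if h : v.tgt = u.src then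
    { src := v.src, tgt := u.tgt, toFun := u.toFun ∘ v.toFun,
      spec := by
        obtain ⟨lu, hu1, hu2⟩ := u.spec
        obtain ⟨lv, hv1, hv2⟩ := v.spec
        refine ⟨lu ++ lv, ?_, ?_⟩
        · rw [C.wordTarget_append, hv1, h, hu1]
        · rw [C.wordMap_append, hv1, h, hu2, hv2] }
  else u

/-- Length of a morphism: minimal length of a realizing word. -/
noncomputable def len (w : Mor C) : ℕ := sInf {k | ∃ l : List I, Realizes w l ∧ l.length = k}

/-- A reduced decomposition. -/
def IsReduced (w : Mor C) (l : List I) : Prop := Realizes w l ∧ l.length = len w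

/-- The (right) weak order: `u ≤_R uv` iff `ℓ(uv) = ℓ(u) + ℓ(v)`. -/
def weakLe (u w : Mor C) : Prop :=
  ∃ v : Mor C, v.tgt = u.src ∧ w = u.comp v ∧ len w = len u + len v

/-- Membership in the parabolic subgroupoid `W_J(C)`. -/
def InParabolic (J : Set I) (w : Mor C) : Prop :=
  ∃ l : List I, (∀ i ∈ l, i ∈ J) ∧ Realizes w l

/-- Length with respect to the generators `σ_j`, `j ∈ J`. -/
noncomputable def lenPar (J : Set I) (w : Mor C) : ℕ :=
  sInf {k | ∃ l : List I, (∀ i ∈ l, i ∈ J) ∧ Realizes w l ∧ l.length = k}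

/-- The set of letters occurring in some reduced decomposition of `w`;
by the theorem on reduced decompositions this is the set `J(w)`. -/
def Jset (w : Mor C) : Set I := {i | ∃ l : List I, IsReduced w l ∧ i ∈ l}

variable (C)

/-- The set of real roots at the object `a`. -/
def roots (a : A) : Set (I → ℤ) :=
  {α | ∃ (b : A) (l : List I) (j : I),
    C.wordTarget b l = a ∧ α = C.wordMap b l (Pi.single j 1)}

/-- The set of positive (real) roots at `a`. -/
def posRoots (a : A) : Set (I → ℤ) := {α ∈ C.roots a | ∀ i, 0 ≤ α i}

/-- `R^re(C)` is a finite root system of type `C`: axioms (R1), (R2), (R4) and finiteness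
((R3) holds automatically for real roots). -/
def IsFRS : Prop :=
  (∀ a : A, (C.roots a).Finite) ∧
  (∀ (a : A) (α : I → ℤ), α ∈ C.roots a → (∀ i, 0 ≤ α i) ∨ (∀ i, α i ≤ 0)) ∧
  (∀ (a : A) (i : I) (α : I → ℤ), α ∈ C.roots a → (∃ z : ℤ, α = z • Pi.single i 1) →
    α = Pi.single i 1 ∨ α = -Pi.single i 1) ∧
  (∀ (a : A) (i j : I), i ≠ j →
    (fun x => C.ρ i (C.ρ j x))^[(C.roots a ∩
      {α | ∃ m n : ℕ, α = (m : ℤ) • Pi.single i 1 + (n : ℤ) • Pi.single j 1}).ncard] a = a)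

variable {C}

/-- `I_L(w)`: the set of simple reflections with target `w.tgt` below `w` in weak order. -/
def IL (w : Mor C) : Set I := {i | weakLe (sgen C w.tgt i) w}

/-- `m` is the longest element of `Hom(-,a) ∩ W_J(C)`, i.e. `w_J` at the object `a`. -/
def IsLongestPar (a : A) (J : Set I) (m : Mor C) : Prop :=
  m.tgt = a ∧ InParabolic J m ∧
    ∀ x : Mor C, x.tgt = a → InParabolic J x → weakLe x m

/-- `m` is the longest element `w_I` of `Hom(-,a)`. -/
def IsLongestAt (a : A) (m : Mor C) : Prop :=
  m.tgt = a ∧ ∀ x : Mor C, x.tgt = a → weakLe x m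

/-- `z` is the meet of `x` and `y` in `(Hom(-,a), ≤_R)`. -/
def IsMeet (a : A) (x y z : Mor C) : Prop :=
  z.tgt = a ∧ weakLe z x ∧ weakLe z y ∧
    ∀ t : Mor C, t.tgt = a → weakLe t x → weakLe t y → weakLe t z

/-- `z` is the join of `x` and `y` in `(Hom(-,a), ≤_R)`. -/
def IsJoin (a : A) (x y z : Mor C) : Prop :=
  z.tgt = a ∧ weakLe x z ∧ weakLe y z ∧
    ∀ t : Mor C, t.tgt = a → weakLe x t → weakLe y t → weakLe z t

/-- The left coset `u W_J(C) ⊆ Hom(-, u.tgt)`. -/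
def leftCoset (u : Mor C) (J : Set I) : Set (Mor C) :=
  {x | ∃ v : Mor C, InParabolic J v ∧ v.tgt = u.src ∧ x = u.comp v}

end CartanScheme

namespace CartanScheme

variable {I A : Type} [Fintype I] [DecidableEq I] [Fintype A] [Nonempty A] [DecidableEq A]

/-- The simple root `α_i`. -/
def sroot (i : I) : I → ℤ := Pi.single i 1

theorem sroot_nonneg (i : I) : 0 ≤ sroot i := by
  intro k
  by_cases h : k = i
  · subst h; simp [sroot]
  · simp [sroot, h]

theorem sroot_same (i : I) : sroot i i = 1 := by simp [sroot]

theorem sroot_ne {i k : I} (h : k ≠ i) : sroot i k = 0 := by simp [sroot, h]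

theorem sroot_inj {i j : I} (h : i ≠ j) : sroot i ≠ sroot j := by
  intro h'
  have := congrFun h' i
  rw [sroot_same, sroot_ne h] at this
  exact one_ne_zero this

variable (C : CartanScheme I A)

/-! ### Words as invertible additive maps -/

theorem sigma_add (a : A) (i : I) (v w : I → ℤ) :
    C.sigma a i (v + w) = C.sigma a i v + C.sigma a i w := by
  funext k
  by_cases h : k = i
  · simp [sigma, h, mul_add, Finset.sum_add_distrib]; ring
  · simp [sigma, h]

theorem wordMap_add (a : A) (l : List I) (v w : I → ℤ) :
    C.wordMap a l (v + w) = C.wordMap a l v + C.wordMap a l w := by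
  induction l with
  | nil => rfl
  | cons i l ih => simp [wordMap, ih, sigma_add]

/-- The action of a word as an additive homomorphism. -/
def wordHom (a : A) (l : List I) : (I → ℤ) →+ (I → ℤ) :=
  AddMonoidHom.mk' (C.wordMap a l) (C.wordMap_add a l)

theorem wordMap_neg (a : A) (l : List I) (v : I → ℤ) :
    C.wordMap a l (-v) = -C.wordMap a l v := map_neg (C.wordHom a l) v

theorem wordMap_zero (a : A) (l : List I) : C.wordMap a l 0 = 0 := map_zero (C.wordHom a l)

theorem wordMap_zsmul (a : A) (l : List I) (n : ℤ) (v : I → ℤ) :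
    C.wordMap a l (n • v) = n • C.wordMap a l v := map_zsmul (C.wordHom a l) n v

theorem wordMap_cons (a : A) (i : I) (l : List I) (v : I → ℤ) :
    C.wordMap a (i :: l) v = C.sigma (C.wordTarget a l) i (C.wordMap a l v) := rfl

theorem wordMap_append_apply (a : A) (l₁ l₂ : List I) (v : I → ℤ) :
    C.wordMap a (l₁ ++ l₂) v = C.wordMap (C.wordTarget a l₂) l₁ (C.wordMap a l₂ v) := by
  rw [wordMap_append]; rfl

theorem sigma_neg (a : A) (i : I) (v : I → ℤ) : C.sigma a i (-v) = -C.sigma a i v :=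
  C.wordMap_neg a [i] v

theorem sigma_sroot (a : A) (i : I) : C.sigma a i (sroot i) = -sroot i := by
  funext k
  by_cases h : k = i
  · subst h; simp [sigma, sroot, Pi.single_apply, C.c_diag]
  · simp [sigma, sroot, h]

theorem sigma_apply_ne (a : A) {i k : I} (h : k ≠ i) (v : I → ℤ) : C.sigma a i v k = v k := by
  simp [sigma, h]

theorem sigma_eq (a : A) (i : I) (v : I → ℤ) :
    C.sigma a i v = v + (-∑ j, C.c a i j * v j) • sroot i := by
  funext k
  by_cases h : k = i
  · subst h; simp [sigma, sroot]; ring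
  · simp [sigma, sroot, h]

theorem sigma_rho (a : A) (i : I) : C.sigma (C.ρ i a) i = C.sigma a i := by
  funext v k
  simp [sigma, C.c_rho]

theorem sigma_sigma (a : A) (i : I) (v : I → ℤ) : C.sigma a i (C.sigma a i v) = v := by
  have hz (n : ℤ) (u : I → ℤ) : C.sigma a i (n • u) = n • C.sigma a i u :=
    C.wordMap_zsmul a [i] n u
  conv_lhs => rw [C.sigma_eq a i v]
  rw [sigma_add, hz, sigma_sroot]
  rw [C.sigma_eq a i v, smul_neg, add_neg_cancel_right]

theorem wordTarget_reverse (a : A) (l : List I) :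
    C.wordTarget (C.wordTarget a l) l.reverse = a := by
  induction l with
  | nil => rfl
  | cons i l ih =>
    rw [List.reverse_cons, wordTarget_append]
    simp [wordTarget, C.ρ_invol, ih]

theorem wordMap_reverse (a : A) (l : List I) (v : I → ℤ) :
    C.wordMap (C.wordTarget a l) l.reverse (C.wordMap a l v) = v := by
  induction l with
  | nil => rfl
  | cons i l ih =>
    rw [List.reverse_cons, wordMap_append_apply]
    simp [wordTarget, wordMap, C.ρ_invol, sigma_rho, sigma_sigma, ih]

theorem wordMap_inj (a : A) (l : List I) {v w : I → ℤ}
    (h : C.wordMap a l v = C.wordMap a l w) : v = w := by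
  rw [← C.wordMap_reverse a l v, h, wordMap_reverse]

theorem wordMap_reverse' (a : A) (l : List I) (v : I → ℤ) :
    C.wordMap a l (C.wordMap (C.wordTarget a l) l.reverse v) = v := by
  have := C.wordMap_reverse (C.wordTarget a l) l.reverse v
  rwa [wordTarget_reverse, List.reverse_reverse] at this

/-- A word does not change the coordinates at indices outside its set of letters. -/
theorem wordMap_apply_notMem (J : Set I) (a : A) (l : List I) (hl : ∀ i ∈ l, i ∈ J)
    (v : I → ℤ) {k : I} (hk : k ∉ J) : C.wordMap a l v k = v k := by
  induction l with
  | nil => rfl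
  | cons i l ih =>
    have hki : k ≠ i := fun h => hk (h ▸ hl i (by simp))
    rw [wordMap_cons, sigma_apply_ne _ _ hki]
    exact ih fun i hi => hl i (by simp [hi])

/-! ### Roots -/

theorem wordMap_sroot_mem (a : A) (l : List I) (j : I) :
    C.wordMap a l (sroot j) ∈ C.roots (C.wordTarget a l) := ⟨a, l, j, rfl, rfl⟩

theorem sroot_mem (a : A) (j : I) : sroot j ∈ C.roots a := ⟨a, [], j, rfl, rfl⟩

theorem wordMap_mem {a : A} (l : List I) {α : I → ℤ} (h : α ∈ C.roots a) :
    C.wordMap a l α ∈ C.roots (C.wordTarget a l) := by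
  obtain ⟨b, l', j, rfl, rfl⟩ := h
  exact ⟨b, l ++ l', j, C.wordTarget_append _ _ _, by rw [wordMap_append_apply]⟩

theorem sigma_mem {a : A} (i : I) {α : I → ℤ} (h : α ∈ C.roots a) :
    C.sigma a i α ∈ C.roots (C.ρ i a) := C.wordMap_mem [i] h

theorem exists_root_map (a : A) (l : List I) (j : I) :
    ∃ γ ∈ C.roots a, C.wordMap a l γ = sroot j := by
  refine ⟨C.wordMap (C.wordTarget a l) l.reverse (sroot j), ?_, C.wordMap_reverse' _ _ _⟩
  have := C.wordMap_sroot_mem (C.wordTarget a l) l.reverse j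
  rwa [wordTarget_reverse] at this

theorem root_ne_zero {a : A} {α : I → ℤ} (h : α ∈ C.roots a) : α ≠ 0 := by
  obtain ⟨b, l, j, rfl, rfl⟩ := h
  intro h0
  have h1 : sroot j = 0 := C.wordMap_inj b l (h0.trans (C.wordMap_zero b l).symm)
  have := congrFun h1 j
  rw [sroot_same] at this
  exact one_ne_zero this

variable {C}

theorem root_pos_or_neg (hC : C.IsFRS) {a : A} {α : I → ℤ} (h : α ∈ C.roots a) :
    0 ≤ α ∨ α ≤ 0 := hC.2.1 a α h

theorem root_nonneg_of_pos (hC : C.IsFRS) {a : A} {α : I → ℤ} (h : α ∈ C.roots a) {k : I}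
    (hk : 0 < α k) : 0 ≤ α :=
  (root_pos_or_neg hC h).resolve_right fun h' => absurd (h' k) (not_le.mpr hk)

/-- The simple reflection `σ_i` permutes the positive roots different from `α_i`. -/
theorem sigma_nonneg (hC : C.IsFRS) {a : A} {i : I} {α : I → ℤ} (h : α ∈ C.roots a)
    (h0 : 0 ≤ α) (hne : α ≠ sroot i) : 0 ≤ C.sigma a i α := by
  refine (root_pos_or_neg hC (C.sigma_mem i h)).resolve_right fun hneg => ?_
  have hz : α = α i • Pi.single i 1 := by
    funext k
    by_cases hk : k = i
    · subst hk; simp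
    · have h1 := hneg k
      rw [sigma_apply_ne _ _ hk] at h1
      simpa [hk] using le_antisymm h1 (h0 k)
  rcases hC.2.2.1 a i α h ⟨_, hz⟩ with h1 | h1
  · exact hne h1
  · have := h0 i
    rw [h1] at this
    simp at this

theorem eq_sroot_of_sigma_nonpos (hC : C.IsFRS) {a : A} {i : I} {α : I → ℤ}
    (h : α ∈ C.roots a) (h0 : 0 ≤ α) (hneg : C.sigma a i α ≤ 0) : α = sroot i := by
  by_contra hne
  exact C.root_ne_zero (C.sigma_mem i h) (le_antisymm hneg (sigma_nonneg hC h h0 hne))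

/-! ### Rank two -/

variable (C)

/-- The roots in `ℕα_s + ℕα_t` at the object `a`, as in axiom (R4). -/
def plane (a : A) (s t : I) : Set (I → ℤ) :=
  C.roots a ∩ {α | ∃ m n : ℕ, α = (m : ℤ) • Pi.single s 1 + (n : ℤ) • Pi.single t 1}

theorem plane_swap (a : A) (s t : I) : C.plane a s t = C.plane a t s := by
  ext α
  constructor <;> rintro ⟨h, m, n, rfl⟩ <;> exact ⟨h, n, m, add_comm _ _⟩

theorem mem_plane_iff {a : A} {s t : I} (hst : s ≠ t) {α : I → ℤ} :
    α ∈ C.plane a s t ↔ α ∈ C.roots a ∧ 0 ≤ α ∧ ∀ k, k ∉ ({s, t} : Set I) → α k = 0 := by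
  constructor
  · rintro ⟨h, m, n, rfl⟩
    refine ⟨h, add_nonneg (smul_nonneg (Int.natCast_nonneg m) (sroot_nonneg s))
      (smul_nonneg (Int.natCast_nonneg n) (sroot_nonneg t)), fun k hk => ?_⟩
    simp only [Set.mem_insert_iff, Set.mem_singleton_iff, not_or] at hk
    simp [hk.1, hk.2]
  · rintro ⟨h, h0, hk⟩
    refine ⟨h, (α s).toNat, (α t).toNat, ?_⟩
    rw [Int.toNat_of_nonneg (h0 s), Int.toNat_of_nonneg (h0 t)]
    funext k
    by_cases hs : k = s
    · subst hs; simp [hst]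
    · by_cases ht : k = t
      · subst ht; simp [hs]
      · simp [hs, ht, hk k (by simp [hs, ht])]

theorem sroot_mem_plane (a : A) (s t : I) : sroot s ∈ C.plane a s t :=
  ⟨C.sroot_mem a s, 1, 0, by simp [sroot]⟩

theorem sroot_mem_plane' (a : A) (s t : I) : sroot t ∈ C.plane a s t :=
  ⟨C.sroot_mem a t, 0, 1, by simp [sroot]⟩

variable {C}

theorem plane_finite (hC : C.IsFRS) (a : A) (s t : I) : (C.plane a s t).Finite :=
  (hC.1 a).subset Set.inter_subset_left

theorem sigma_mem_plane (hC : C.IsFRS) {a : A} {s t : I} (hst : s ≠ t) {α : I → ℤ}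
    (h : α ∈ C.plane a s t) (hne : α ≠ sroot s) : C.sigma a s α ∈ C.plane (C.ρ s a) s t := by
  rw [mem_plane_iff C hst] at h ⊢
  refine ⟨C.sigma_mem s h.1, sigma_nonneg hC h.1 h.2.1 hne, fun k hk => ?_⟩
  have hks : k ≠ s := fun h => hk (by simp [h])
  rw [sigma_apply_ne _ _ hks, h.2.2 k hk]

theorem plane_card_le (hC : C.IsFRS) (a : A) {s t : I} (hst : s ≠ t) :
    (C.plane a s t).ncard ≤ (C.plane (C.ρ s a) s t).ncard := by
  rw [← Set.ncard_sdiff_singleton_add_one (C.sroot_mem_plane a s t) (plane_finite hC a s t),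
    ← Set.ncard_sdiff_singleton_add_one (C.sroot_mem_plane (C.ρ s a) s t) (plane_finite hC _ s t)]
  refine Nat.add_le_add_right ?_ 1
  refine Set.ncard_le_ncard_of_injOn (C.sigma a s) ?_ ?_ (plane_finite hC _ s t).sdiff
  · rintro α ⟨h, hne⟩
    refine ⟨sigma_mem_plane hC hst h hne, fun h' => ?_⟩
    have h2 : α = -sroot s := by
      rw [← C.sigma_sroot a s, ← Set.mem_singleton_iff.mp h', sigma_sigma]
    have h3 := ((mem_plane_iff C hst).mp h).2.1 s
    rw [h2, Pi.neg_apply, sroot_same] at h3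
    simp at h3
  · intro α _ β _ h
    rw [← C.sigma_sigma a s α, h, sigma_sigma]

theorem plane_card_rho (hC : C.IsFRS) (a : A) {s t : I} (hst : s ≠ t) :
    (C.plane (C.ρ s a) s t).ncard = (C.plane a s t).ncard := by
  refine le_antisymm ?_ (plane_card_le hC a hst)
  have := plane_card_le hC (C.ρ s a) hst
  rwa [C.ρ_invol] at this

theorem plane_card_word (hC : C.IsFRS) (a : A) {s t : I} (hst : s ≠ t) (l : List I)
    (hl : ∀ i ∈ l, i ∈ ({s, t} : Set I)) :
    (C.plane (C.wordTarget a l) s t).ncard = (C.plane a s t).ncard := by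
  induction l with
  | nil => rfl
  | cons i l ih =>
    rw [← ih fun i hi => hl i (by simp [hi])]
    rcases hl i (by simp) with rfl | h
    · exact plane_card_rho hC _ hst
    · rw [Set.mem_singleton_iff.mp h, plane_swap, plane_swap C _ s t]
      exact plane_card_rho hC _ hst.symm

/-- The letter at position `k` in the sequence `s, t, s, t, …`. -/
def altLetter : I → I → ℕ → I
  | s, _, 0 => s
  | s, t, k + 1 => altLetter t s k

/-- The alternating word of length `k` in `s, t` whose rightmost (first applied) letter is `s`. -/
def altWord (s t : I) : ℕ → List I
  | 0 => []
  | k + 1 => altLetter s t k :: altWord s t k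

theorem altWord_length (s t : I) (k : ℕ) : (altWord s t k).length = k := by
  induction k with
  | zero => rfl
  | succ k ih => simp [altWord, ih]

theorem altWord_succ (s t : I) (k : ℕ) : altWord s t (k + 1) = altWord t s k ++ [s] := by
  induction k with
  | zero => rfl
  | succ k ih =>
    rw [altWord, ih]; rfl

theorem altWord_reverse (s t : I) (k : ℕ) :
    (altWord s t k).reverse = altWord (altLetter t s k) (altLetter s t k) k := by
  induction k generalizing s t with
  | zero => rfl
  | succ k ih =>
    rw [altWord, List.reverse_cons, ih, altWord_succ]; rfl

theorem altLetter_cases (s t : I) (k : ℕ) :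
    (altLetter s t k = s ∧ altLetter t s k = t) ∨ (altLetter s t k = t ∧ altLetter t s k = s) := by
  induction k generalizing s t with
  | zero => exact Or.inl ⟨rfl, rfl⟩
  | succ k ih => exact (ih t s).symm

theorem altLetter_mem (s t : I) (k : ℕ) : altLetter s t k ∈ ({s, t} : Set I) := by
  rcases altLetter_cases s t k with h | h <;> simp [h.1]

theorem altWord_mem (s t : I) (k : ℕ) : ∀ i ∈ altWord s t k, i ∈ ({s, t} : Set I) := by
  induction k with
  | zero => simp [altWord]
  | succ k ih =>
    intro i hi
    rcases List.mem_cons.mp hi with rfl | hi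
    · exact altLetter_mem s t k
    · exact ih i hi

theorem altLetter_ne {s t : I} (h : s ≠ t) (k : ℕ) : altLetter t s k ≠ altLetter s t k := by
  rcases altLetter_cases s t k with h' | h' <;> rw [h'.1, h'.2]
  · exact h.symm
  · exact h

theorem plane_altLetter (a : A) (s t : I) (k : ℕ) :
    C.plane a (altLetter s t k) (altLetter t s k) = C.plane a s t := by
  rcases altLetter_cases s t k with h | h <;> rw [h.1, h.2]
  exact C.plane_swap a t s

variable (C) in
/-- The positive roots in the plane of `s, t` which the word `l` makes negative. -/
def planeInv (s t : I) (b : A) (l : List I) : Set (I → ℤ) :=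
  {α ∈ C.plane b s t | C.wordMap b l α ≤ 0}

theorem planeInv_finite (hC : C.IsFRS) (s t : I) (b : A) (l : List I) :
    (C.planeInv s t b l).Finite := (plane_finite hC b s t).subset (Set.sep_subset _ _)

theorem planeInv_card_le (hC : C.IsFRS) {s t : I} (hst : s ≠ t) (b : A) (l : List I) :
    (C.planeInv s t b l).ncard ≤ l.length := by
  induction l with
  | nil =>
    have : C.planeInv s t b [] = ∅ := by
      refine Set.eq_empty_of_forall_notMem ?_
      rintro α ⟨h, hneg⟩
      rw [mem_plane_iff C hst] at h
      exact C.root_ne_zero h.1 (le_antisymm hneg h.2.1)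
    simp [this]
  | cons x l ih =>
    obtain ⟨δ, -, hδ⟩ := C.exists_root_map b l x
    have hsub : C.planeInv s t b (x :: l) ⊆ insert δ (C.planeInv s t b l) := by
      rintro α ⟨h, hneg⟩
      have hr := C.wordMap_mem l ((mem_plane_iff C hst).mp h).1
      rcases root_pos_or_neg hC hr with h0 | h0
      · refine Or.inl (C.wordMap_inj b l ?_)
        rw [hδ]
        exact eq_sroot_of_sigma_nonpos hC hr h0 hneg
      · exact Or.inr ⟨h, h0⟩
    calc _ ≤ (insert δ (C.planeInv s t b l)).ncard :=
          Set.ncard_le_ncard hsub ((planeInv_finite hC s t b l).insert δ)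
      _ ≤ _ := (Set.ncard_insert_le _ _).trans (by simpa using ih)

theorem planeInv_card_cons (hC : C.IsFRS) {s t : I} (hst : s ≠ t) {b : A} {l : List I} {x : I}
    {δ : I → ℤ} (hδ : δ ∈ C.plane b s t) (h : C.wordMap b l δ = sroot x) :
    (C.planeInv s t b l).ncard + 1 ≤ (C.planeInv s t b (x :: l)).ncard := by
  have hnot : δ ∉ C.planeInv s t b l := by
    rintro ⟨-, hneg⟩
    have := hneg x
    rw [h, sroot_same] at this
    simp at this
  rw [← Set.ncard_insert_of_notMem hnot (planeInv_finite hC s t b l)]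
  refine Set.ncard_le_ncard ?_ (planeInv_finite hC s t b _)
  rintro α (rfl | ⟨hα, hneg⟩)
  · refine ⟨hδ, ?_⟩
    rw [wordMap_cons, h, sigma_sroot]
    exact neg_nonpos.mpr (sroot_nonneg x)
  · refine ⟨hα, ?_⟩
    have hα' := (mem_plane_iff C hst).mp hα
    have hδ' := (mem_plane_iff C hst).mp hδ
    refine (root_pos_or_neg hC (C.wordMap_mem (x :: l) hα'.1)).resolve_left fun hpos => ?_
    rw [wordMap_cons] at hpos
    -- `l α` is a negative root with `σ_x (l α)` positive, so `l α = -α_x = -l δ`.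
    have h1 := eq_sroot_of_sigma_nonpos (a := C.ρ x (C.wordTarget b l)) hC
      (C.sigma_mem x (C.wordMap_mem l hα'.1)) hpos (by rwa [sigma_rho, sigma_sigma])
    have h2 : α = -δ := by
      refine C.wordMap_inj b l ?_
      rw [wordMap_neg, h, ← C.sigma_sroot (C.wordTarget b l) x, ← h1, sigma_sigma]
    refine C.root_ne_zero hα'.1 (le_antisymm ?_ hα'.2.1)
    rw [h2]
    exact neg_nonpos.mpr hδ'.2.1

/-- An alternating word with fewer letters than the plane of `s, t` has positive roots keeps `α_t`
positive if its first applied letter is `s`. Otherwise the first word that fails would make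
both `α_s` and `α_t`, hence all positive roots of the plane, negative; but a word of length `k`
inverts at most `k` roots. -/
theorem altWord_pos (hC : C.IsFRS) (k : ℕ) : ∀ (b : A) {s t : I}, s ≠ t →
    k < (C.plane b s t).ncard → 0 ≤ C.wordMap b (altWord s t k) (sroot t) := by
  induction k using Nat.strong_induction_on with
  | _ k ih =>
  intro b s t hst hk
  match k with
  | 0 => exact sroot_nonneg t
  | 1 => exact sigma_nonneg hC (C.sroot_mem b t) (sroot_nonneg t) (sroot_inj hst.symm)
  | k + 2 =>
    refine (root_pos_or_neg hC (C.wordMap_sroot_mem b _ t)).resolve_right fun hneg => ?_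
    set x := altLetter s t (k + 1) with hx
    have hu : altWord s t (k + 2) = x :: altWord s t (k + 1) := rfl
    set u := altWord s t (k + 1) with hu'
    have h1 : C.wordMap b u (sroot t) = sroot x :=
      eq_sroot_of_sigma_nonpos hC (C.wordMap_sroot_mem b u t)
        (ih (k + 1) (by omega) b hst (by omega)) (by rw [hu] at hneg; exact hneg)
    have hcard : (C.plane (C.ρ s b) t s).ncard = (C.plane b s t).ncard := by
      rw [plane_swap, plane_card_rho hC b hst]
    set p := C.wordMap (C.ρ s b) (altWord t s k) (sroot s) with hp
    have hp0 : 0 ≤ p := ih k (by omega) (C.ρ s b) hst.symm (by omega)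
    have htar : C.wordTarget b u = C.wordTarget (C.ρ s b) (altWord t s k) := by
      rw [hu', altWord_succ, wordTarget_append]; rfl
    have h2 : C.wordMap b u (sroot s) = -p := by
      rw [hu', altWord_succ, wordMap_append_apply, hp, ← wordMap_neg, ← C.sigma_sroot b s]; rfl
    have hpr : p ∈ C.roots (C.wordTarget b u) := htar ▸ C.wordMap_sroot_mem _ _ s
    have hpx : p ≠ sroot x := by
      intro h
      have h3 : sroot s + sroot t = 0 := by
        refine C.wordMap_inj b u ?_
        rw [wordMap_add, h1, h2, h, wordMap_zero, neg_add_cancel]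
      have h4 := congrFun h3 s
      simp [sroot_same, sroot_ne hst] at h4
    have hq := sigma_nonneg hC hpr hp0 hpx
    have hall : C.plane b s t ⊆ C.planeInv s t b (x :: u) := by
      rintro α hα
      refine ⟨hα, ?_⟩
      obtain ⟨-, m, n, rfl⟩ := hα
      have e1 : C.wordMap b (x :: u) (sroot s) ≤ 0 := by
        rw [wordMap_cons, h2, sigma_neg]
        exact neg_nonpos.mpr hq
      have e2 : C.wordMap b (x :: u) (sroot t) ≤ 0 := by
        rw [← hu]; exact hneg
      rw [wordMap_add, wordMap_zsmul, wordMap_zsmul]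
      exact add_nonpos (smul_nonpos_of_nonneg_of_nonpos (Int.natCast_nonneg m) e1)
        (smul_nonpos_of_nonneg_of_nonpos (Int.natCast_nonneg n) e2)
    have h3 := Set.ncard_le_ncard hall (planeInv_finite hC s t b _)
    have h4 := planeInv_card_le hC hst b (x :: u)
    have h5 : (x :: u).length = k + 2 := by rw [← hu, altWord_length]
    omega

theorem altWord_reverse_pos (hC : C.IsFRS) {s t : I} (hst : s ≠ t) (b : A) (k : ℕ)
    (hk : k < (C.plane b s t).ncard) :
    C.wordMap b (altWord s t k).reverse (sroot (altLetter s t k)) ∈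
      C.plane (C.wordTarget b (altWord s t k).reverse) s t := by
  rw [mem_plane_iff C hst]
  refine ⟨C.wordMap_sroot_mem _ _ _, ?_, fun i hi => ?_⟩
  · rw [altWord_reverse]
    refine altWord_pos hC k b (altLetter_ne hst k) ?_
    rwa [plane_altLetter, plane_swap]
  · rw [C.wordMap_apply_notMem {s, t} _ _
      (fun i hi => altWord_mem s t k i (List.mem_reverse.mp hi)) _ hi]
    exact sroot_ne fun h => hi (h ▸ altLetter_mem s t k)

theorem planeInv_altWord (hC : C.IsFRS) {s t : I} (hst : s ≠ t) (b : A) (k : ℕ)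
    (hk : k ≤ (C.plane b s t).ncard) : k ≤ (C.planeInv s t b (altWord s t k)).ncard := by
  induction k with
  | zero => exact Nat.zero_le _
  | succ k ih =>
    have h1 := altWord_reverse_pos hC hst (C.wordTarget b (altWord s t k)) k (by
      rw [plane_card_word hC b hst _ (altWord_mem s t k)]; omega)
    rw [wordTarget_reverse] at h1
    have h2 := planeInv_card_cons hC hst h1 (C.wordMap_reverse' _ _ _)
    have h3 := ih (by omega)
    change k + 1 ≤ (C.planeInv s t b (altLetter s t k :: altWord s t k)).ncard
    omega

/-- If the plane of `s, t` has `m + 1` positive roots, the alternating word of length `m` with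
first applied letter `s` sends `α_t` to the simple root of the next letter. -/
theorem altWord_sroot (hC : C.IsFRS) {s t : I} (hst : s ≠ t) (b : A) (m : ℕ)
    (hm : (C.plane b s t).ncard = m + 1) :
    C.wordMap b (altWord s t m) (sroot t) = sroot (altLetter s t m) := by
  have hle := planeInv_altWord hC hst b (m + 1) hm.ge
  have heq := Set.eq_of_subset_of_ncard_le (s := C.planeInv s t b (altWord s t (m + 1)))
    (Set.sep_subset _ _) (by omega) (plane_finite hC b s t)
  have hneg : sroot t ∈ C.planeInv s t b (altWord s t (m + 1)) :=
    heq ▸ C.sroot_mem_plane' b s t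
  exact eq_sroot_of_sigma_nonpos hC (C.wordMap_sroot_mem b _ t)
    (altWord_pos hC m b hst (by omega)) hneg.2

theorem braid_sroot (hC : C.IsFRS) {s t : I} (hst : s ≠ t) (b : A) :
    C.wordMap b (altWord s t (C.plane b s t).ncard) (sroot t) =
      C.wordMap b (altWord t s (C.plane b s t).ncard) (sroot t) := by
  obtain ⟨m, hm⟩ : ∃ m, (C.plane b s t).ncard = m + 1 := by
    refine Nat.exists_eq_succ_of_ne_zero ?_
    rw [Ne, Set.ncard_eq_zero (plane_finite hC b s t)]
    exact Set.nonempty_iff_ne_empty.mp ⟨_, C.sroot_mem_plane b s t⟩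
  have hm' : (C.plane (C.ρ t b) s t).ncard = m + 1 := by
    rw [plane_swap, plane_card_rho hC b hst.symm, plane_swap, hm]
  rw [hm]
  conv_rhs => rw [altWord_succ, wordMap_append_apply]
  change C.sigma _ _ _ = C.wordMap (C.ρ t b) (altWord s t m) (C.sigma b t (sroot t))
  rw [altWord_sroot hC hst b m hm, sigma_sroot, sigma_sroot, wordMap_neg,
    altWord_sroot hC hst _ m hm']

theorem altWord_add (s t : I) (m k : ℕ) :
    altWord s t (m + k) = altWord (altLetter s t m) (altLetter t s m) k ++ altWord s t m := by
  have hE : ∀ (m k : ℕ) (s t : I),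
      altLetter s t (m + k) = altLetter (altLetter s t m) (altLetter t s m) k := by
    intro m
    induction m with
    | zero => intro k s t; rw [Nat.zero_add]; rfl
    | succ m ih => intro k s t; rw [Nat.add_right_comm]; exact ih k t s
  induction k with
  | zero => rfl
  | succ k ih =>
    rw [← Nat.add_assoc, altWord, ih, hE]; rfl

theorem wordTarget_altWord_double (s t : I) (b : A) (m : ℕ) :
    C.wordTarget b (altWord s t (m + m)) = (fun x => C.ρ t (C.ρ s x))^[m] b := by
  induction m generalizing b with
  | zero => rfl
  | succ m ih =>
    rw [show m + 1 + (m + 1) = (m + m) + 1 + 1 by omega, altWord_succ, altWord_succ,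
      wordTarget_append, wordTarget_append, Function.iterate_succ_apply, ← ih]
    rfl

theorem braid_target (hC : C.IsFRS) {s t : I} (hst : s ≠ t) (b : A) :
    C.wordTarget b (altWord s t (C.plane b s t).ncard) =
      C.wordTarget b (altWord t s (C.plane b s t).ncard) := by
  set m := (C.plane b s t).ncard with hm
  have h1 : C.wordTarget b (altWord s t (m + m)) = b := by
    rw [wordTarget_altWord_double, hm, plane_swap]
    exact hC.2.2.2 b t s hst.symm
  rw [altWord_add, wordTarget_append, ← altWord_reverse] at h1
  have h2 := C.wordTarget_reverse (C.wordTarget b (altWord s t m)) (altWord t s m).reverse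
  rw [h1, List.reverse_reverse] at h2
  exact h2.symm

variable (C) in
/-- Two words represent the same morphism with source `b`. -/
def WordEq (b : A) (l₁ l₂ : List I) : Prop :=
  C.wordTarget b l₁ = C.wordTarget b l₂ ∧ C.wordMap b l₁ = C.wordMap b l₂

/-- For words `l, l'` with letters in `{s, t}` and equal targets, which agree on `α_s` and `α_t`:
`l'⁻¹ l` sends each further simple root `α_k` to `α_k + xα_s + yα_t` with `x, y ≥ 0`, and so does
its inverse, which forces `x = y = 0`. -/
theorem wordMap_eq_of_plane (hC : C.IsFRS) {s t : I} (hst : s ≠ t) (b : A) {l l' : List I}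
    (hl : ∀ i ∈ l, i ∈ ({s, t} : Set I)) (hl' : ∀ i ∈ l', i ∈ ({s, t} : Set I))
    (htar : C.wordTarget b l = C.wordTarget b l')
    (hs : C.wordMap b l (sroot s) = C.wordMap b l' (sroot s))
    (ht : C.wordMap b l (sroot t) = C.wordMap b l' (sroot t)) :
    C.wordMap b l = C.wordMap b l' := by
  have key : ∀ (l l' : List I), (∀ i ∈ l, i ∈ ({s, t} : Set I)) →
      (∀ i ∈ l', i ∈ ({s, t} : Set I)) → C.wordTarget b l = C.wordTarget b l' →
      ∀ k, k ∉ ({s, t} : Set I) → ∃ x y : ℤ, 0 ≤ x ∧ 0 ≤ y ∧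
        C.wordMap b l (sroot k) =
          C.wordMap b l' (sroot k + (x • sroot s + y • sroot t)) := by
    intro l l' hl hl' htar k hk
    set α := C.wordMap (C.wordTarget b l') l'.reverse (C.wordMap b l (sroot k)) with hα
    have hαi : ∀ i, i ∉ ({s, t} : Set I) → α i = sroot k i := by
      intro i hi
      rw [hα, C.wordMap_apply_notMem {s, t} _ _ (fun j hj => hl' j (List.mem_reverse.mp hj)) _ hi,
        C.wordMap_apply_notMem {s, t} _ _ hl _ hi]
    have hr : α ∈ C.roots b := by
      have h1 := C.wordMap_mem l'.reverse (C.wordMap_sroot_mem b l k)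
      rwa [htar, wordTarget_reverse] at h1
    have h0 : 0 ≤ α := root_nonneg_of_pos hC hr (k := k) (by rw [hαi k hk, sroot_same]; simp)
    refine ⟨α s, α t, h0 s, h0 t, ?_⟩
    have hform : sroot k + (α s • sroot s + α t • sroot t) = α := by
      have hks : s ≠ k := fun h => hk (by simp [h])
      have hkt : t ≠ k := fun h => hk (by simp [h])
      funext i
      by_cases his : i = s
      · subst his; simp [sroot_same, sroot_ne hst, sroot_ne hks]
      · by_cases hit : i = t
        · subst hit; simp [sroot_same, sroot_ne hst.symm, sroot_ne hkt]
        · rw [hαi i (by simp [his, hit])]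
          simp [sroot_ne his, sroot_ne hit]
    rw [hform, hα, wordMap_reverse']
  have hsimple : ∀ k, C.wordMap b l (sroot k) = C.wordMap b l' (sroot k) := by
    intro k
    by_cases hk : k ∈ ({s, t} : Set I)
    · rcases hk with rfl | hk
      · exact hs
      · rw [Set.mem_singleton_iff.mp hk]; exact ht
    · obtain ⟨x, y, hx, hy, h1⟩ := key l l' hl hl' htar k hk
      obtain ⟨x', y', hx', hy', h2⟩ := key l' l hl' hl htar.symm k hk
      have h3 : (x + x') • sroot s + (y + y') • sroot t = 0 := by
        refine C.wordMap_inj b l ?_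
        rw [wordMap_zero]
        simp only [wordMap_add, wordMap_zsmul, add_smul, ← hs, ← ht] at h1 h2 ⊢
        rw [h1] at h2
        have h4 : C.wordMap b l' (sroot k) + 0 = C.wordMap b l' (sroot k) +
            ((x • C.wordMap b l (sroot s) + x' • C.wordMap b l (sroot s)) +
              (y • C.wordMap b l (sroot t) + y' • C.wordMap b l (sroot t))) := by
          rw [add_zero]
          conv_lhs => rw [h2]
          abel
        exact (add_left_cancel h4).symm
      have hxs := congrFun h3 s
      have hyt := congrFun h3 t
      simp [sroot_same, sroot_ne hst] at hxs
      simp [sroot_same, sroot_ne hst.symm] at hyt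
      have hx0 : x = 0 := by omega
      have hy0 : y = 0 := by omega
      rw [h1, hx0, hy0, zero_smul, zero_smul, add_zero, add_zero]
  have hhom : C.wordHom b l = C.wordHom b l' := by
    refine AddMonoidHom.functions_ext' _ _ _ fun k => AddMonoidHom.ext_int ?_
    exact hsimple k
  exact congrArg (fun f : (I → ℤ) →+ (I → ℤ) => (f : (I → ℤ) → (I → ℤ))) hhom

/-- The Coxeter relation of rank two. -/
theorem braid (hC : C.IsFRS) {s t : I} (hst : s ≠ t) (b : A) :
    C.WordEq b (altWord s t (C.plane b s t).ncard) (altWord t s (C.plane b s t).ncard) := by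
  refine ⟨braid_target hC hst b, wordMap_eq_of_plane hC hst b (altWord_mem s t _) (fun i hi => ?_)
    (braid_target hC hst b) ?_ (braid_sroot hC hst b)⟩
  · rw [Set.pair_comm]; exact altWord_mem t s _ i hi
  · have := braid_sroot hC hst.symm b
    rw [plane_swap C b t s] at this
    exact this.symm

theorem braid_reverse (hC : C.IsFRS) {s t : I} (hst : s ≠ t) (b : A) :
    C.WordEq b (altWord s t (C.plane b s t).ncard).reverse
      (altWord t s (C.plane b s t).ncard).reverse := by
  set m := (C.plane b s t).ncard with hm
  have h := braid hC (altLetter_ne hst m) b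
  rw [plane_altLetter, plane_swap, ← hm] at h
  rwa [altWord_reverse, altWord_reverse]

/-! ### The exchange property -/

theorem WordEq.symm {b : A} {l l' : List I} (h : C.WordEq b l l') : C.WordEq b l' l :=
  ⟨h.1.symm, h.2.symm⟩

theorem WordEq.trans {b : A} {l l' l'' : List I} (h : C.WordEq b l l') (h' : C.WordEq b l' l'') :
    C.WordEq b l l'' := ⟨h.1.trans h'.1, h.2.trans h'.2⟩

theorem WordEq.append_left {b : A} {l l' : List I} (h : C.WordEq b l l') (u : List I) :
    C.WordEq b (u ++ l) (u ++ l') := by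
  constructor
  · rw [wordTarget_append, wordTarget_append, h.1]
  · rw [wordMap_append, wordMap_append, h.1, h.2]

theorem WordEq.append_right {b : A} {u u' : List I} (l : List I)
    (h : C.WordEq (C.wordTarget b l) u u') : C.WordEq b (u ++ l) (u' ++ l) := by
  constructor
  · rw [wordTarget_append, wordTarget_append, h.1]
  · rw [wordMap_append, wordMap_append, h.2]

theorem wordEq_cancel (b : A) (i : I) (l : List I) : C.WordEq b (i :: i :: l) l := by
  constructor
  · exact C.ρ_invol i _
  · funext v
    change C.sigma (C.ρ i _) i (C.sigma _ i _) = _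
    rw [sigma_rho, sigma_sigma]

variable (C) in
/-- `i` is a left descent of the word `l`: the inverse of `l` makes `α_i` nonpositive. -/
def Desc (b : A) (l : List I) (i : I) : Prop := ∃ β ≤ 0, C.wordMap b l β = sroot i

/-- The exchange property: a left descent `i` of `l` can be made the leftmost letter, the rest
being shorter than `l`. The induction is on the length of `l`. -/
theorem exchange (hC : C.IsFRS) (b : A) (n : ℕ) : ∀ (l : List I), l.length = n → ∀ i, C.Desc b l i →
    ∃ l', l'.length < l.length ∧ C.WordEq b (i :: l') l := by
  induction n using Nat.strong_induction_on with
  | _ n ih =>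
  rintro l rfl i ⟨β, hβ, hβi⟩
  match l with
  | [] =>
    have h1 := hβ i
    change β = sroot i at hβi
    rw [hβi, sroot_same] at h1
    simp at h1
  | j :: l₂ =>
    by_cases hij : i = j
    · subst hij
      exact ⟨l₂, by simp, rfl, rfl⟩
    have hji : j ≠ i := Ne.symm hij
    obtain ⟨γ, hγr, hγ⟩ := C.exists_root_map b (j :: l₂) j
    rcases root_pos_or_neg hC hγr with hγ0 | hγ0
    · -- `j` is a descent of `l₂`, so the letter `j` cancels.
      have hd : C.Desc b l₂ j := by
        refine ⟨-γ, neg_nonpos.mpr hγ0, ?_⟩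
        rw [wordMap_cons] at hγ
        rw [wordMap_neg, ← C.sigma_sigma (C.wordTarget b l₂) j (C.wordMap b l₂ γ), hγ, sigma_sroot,
          neg_neg]
      obtain ⟨l₃, hl₃, he⟩ := ih l₂.length (by simp) l₂ rfl j hd
      have he' : C.WordEq b l₃ (j :: l₂) :=
        (wordEq_cancel b j l₃).symm.trans (he.append_left [j])
      obtain ⟨l', hl', he''⟩ := ih l₃.length (by simp; omega) l₃ rfl i
        ⟨β, hβ, by rw [he'.2]; exact hβi⟩
      exact ⟨l', by simp; omega, he''.trans he'⟩
    · set l := j :: l₂ with hl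
      set m := (C.plane (C.wordTarget b l) j i).ncard with hm
      have hcard : ∀ r v, C.WordEq b ((altWord j i r).reverse ++ v) l →
          (C.plane (C.wordTarget b v) j i).ncard = m := by
        intro r v h
        rw [hm, ← h.1, wordTarget_append]
        exact (plane_card_word hC _ hji _
          fun k hk => altWord_mem j i r k (List.mem_reverse.mp hk)).symm
      -- Every positive root of the plane of `i, j` is a combination of `α_i`, `α_j` with
      -- coefficients in `ℕ`, so the next alternating letter is a descent of the remaining word.
      have split : ∀ r, 1 ≤ r → r ≤ m → ∃ v : List I, v.length + r ≤ l.length ∧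
          C.WordEq b ((altWord j i r).reverse ++ v) l := by
        intro r hr
        induction r, hr using Nat.le_induction with
        | base => exact fun _ => ⟨l₂, by simp [hl], rfl, rfl⟩
        | succ r hr ihr =>
          intro hrm
          obtain ⟨v, hv, he⟩ := ihr (by omega)
          have hP := altWord_reverse_pos hC hji (C.wordTarget b v) r (by
            rw [hcard r v he]; omega)
          obtain ⟨-, p, q, hpq⟩ := hP
          have hd : C.Desc b v (altLetter j i r) := by
            refine ⟨(p : ℤ) • γ + (q : ℤ) • β,
              add_nonpos (smul_nonpos_of_nonneg_of_nonpos (Int.natCast_nonneg p) hγ0)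
                (smul_nonpos_of_nonneg_of_nonpos (Int.natCast_nonneg q) hβ), ?_⟩
            refine C.wordMap_inj (C.wordTarget b v) (altWord j i r).reverse ?_
            rw [hpq, ← wordMap_append_apply, he.2, wordMap_add, wordMap_zsmul, wordMap_zsmul, hγ,
              hβi]
            rfl
          obtain ⟨v', hv', he'⟩ := ih v.length (by omega) v rfl _ hd
          refine ⟨v', by omega, ?_⟩
          rw [altWord, List.reverse_cons, List.append_assoc]
          exact (he'.append_left _).trans he
      obtain ⟨m', hm'⟩ : ∃ m', m = m' + 1 := by
        refine Nat.exists_eq_succ_of_ne_zero ?_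
        rw [hm, Ne, Set.ncard_eq_zero (plane_finite hC _ j i)]
        exact Set.nonempty_iff_ne_empty.mp ⟨_, C.sroot_mem_plane _ j i⟩
      obtain ⟨v, hv, he⟩ := split m (by omega) le_rfl
      have hb := braid_reverse hC hji (C.wordTarget b v)
      rw [hcard m v he] at hb
      have hfin := (hb.symm.append_right v).trans he
      rw [hm', altWord_succ, List.reverse_append] at hfin
      refine ⟨(altWord j i m').reverse ++ v, ?_, hfin⟩
      rw [List.length_append, List.length_reverse, altWord_length]
      omega

/-! ### Letters of reduced words -/

/-- Here reducedness of `l` is expressed as minimality among the words representing the same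
morphism. -/
theorem letters_mem (hC : C.IsFRS) (J : Set I) (b : A) (l : List I)
    (hmin : ∀ l', C.WordEq b l' l → l.length ≤ l'.length)
    (H : ∀ α ∈ C.posRoots b, 0 ≤ C.wordMap b l α ∨ ∀ i ∉ J, C.wordMap b l α i = 0) :
    ∀ i ∈ l, i ∈ J := by
  induction l with
  | nil => simp
  | cons i l ih =>
    obtain ⟨γ, hγr, hγ⟩ := C.exists_root_map b l i
    have hγ0 : 0 ≤ γ := by
      refine (root_pos_or_neg hC hγr).resolve_right fun hneg => ?_
      obtain ⟨l', hl', he⟩ := exchange hC b _ l rfl i ⟨γ, hneg, hγ⟩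
      have := hmin l' ((wordEq_cancel b i l').symm.trans (he.append_left [i]))
      simp at this
      omega
    have hiJ : i ∈ J := by
      by_contra hi
      have h1 := H γ ⟨hγr, hγ0⟩
      rw [wordMap_cons, hγ, sigma_sroot] at h1
      rcases h1 with h1 | h1
      · have := h1 i
        simp [sroot_same] at this
      · have := h1 i hi
        simp [sroot_same] at this
    have hne : ∀ k ∉ J, k ≠ i := fun k hk h => hk (h ▸ hiJ)
    have hrec := ih (fun l' h => by simpa using hmin (i :: l') (h.append_left [i])) (by
      rintro α hα
      have hσ : C.wordMap b l α =
          C.sigma (C.wordTarget b (i :: l)) i (C.wordMap b (i :: l) α) := by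
        change _ = C.sigma (C.ρ i _) i (C.sigma _ i _)
        rw [sigma_rho, sigma_sigma]
      by_cases hs : C.wordMap b (i :: l) α = sroot i
      · right
        intro k hk
        rw [hσ, hs, sigma_sroot, Pi.neg_apply, sroot_ne (hne k hk), neg_zero]
      · rcases H α hα with h1 | h1
        · left
          rw [hσ]
          exact sigma_nonneg hC (C.wordMap_mem (i :: l) hα.1) h1 hs
        · right
          intro k hk
          rw [hσ, sigma_apply_ne _ _ (hne k hk), h1 k hk])
    intro k hk
    rcases List.mem_cons.mp hk with rfl | hk
    · exact hiJ
    · exact hrec k hk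

theorem exists_reduced (w : Mor C) : ∃ l, IsReduced w l := by
  obtain ⟨l₀, h₀⟩ := w.spec
  obtain ⟨l, h, hl⟩ := Nat.sInf_mem
    (s := {k | ∃ l : List I, Realizes w l ∧ l.length = k}) ⟨_, l₀, h₀, rfl⟩
  exact ⟨l, h, hl⟩

end CartanScheme

variable {I A : Type} [Fintype I] [DecidableEq I] [Fintype A] [Nonempty A] [DecidableEq A]

open CartanScheme


/-- `J(w) ⊆ J` iff `w(R^b_+) ⊆ R^a_+ ∪ Σ_{j∈J} ℤ α_j`. -/
theorem Jset_subset_iff (C : CartanScheme I A) (hC : C.IsFRS)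
    (a b : A) (J : Set I) (w : Mor C) (hsrc : w.src = b) (htgt : w.tgt = a) :
    Jset w ⊆ J ↔
      ∀ α ∈ C.posRoots b, w.toFun α ∈ C.posRoots a ∪ {β : I → ℤ | ∀ i ∉ J, β i = 0} := by
  constructor
  · intro h α hα
    obtain ⟨l, hl⟩ := exists_reduced w
    have hlJ : ∀ i ∈ l, i ∈ J := fun i hi => h ⟨l, hl, hi⟩
    obtain ⟨⟨h1, h2⟩, -⟩ := hl
    subst hsrc htgt
    rw [← h1, ← h2]
    have hr := C.wordMap_mem l hα.1
    by_cases hz : ∀ i ∉ J, C.wordMap w.src l α i = 0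
    · exact Or.inr hz
    · push Not at hz
      obtain ⟨i, hi, hne⟩ := hz
      refine Or.inl ⟨hr, root_nonneg_of_pos hC hr (k := i) ?_⟩
      rw [C.wordMap_apply_notMem J _ l hlJ _ hi] at hne ⊢
      exact lt_of_le_of_ne (hα.2 i) hne.symm
  · rintro H i ⟨l, ⟨⟨h1, h2⟩, hlen⟩, hi⟩
    subst hsrc htgt
    refine letters_mem hC J w.src l (fun l' h => ?_) (fun α hα => ?_) i hi
    · rw [hlen]
      exact Nat.sInf_le ⟨l', ⟨h.1.trans h1, h.2.trans h2⟩, rfl⟩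
    · rw [h2]
      exact (H α hα).imp (fun h => h.2) id
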